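/- Suppose v_0^n = x^n ∈ ℝ^{N_in} (so K_0 = N_in), and suppose Assumption 2 (ℓ differentiable and convex in its first argument), Assumption 3 (M ≥ N_o), and Assumption 4 (the linear map (c_0,…,c_{L−1}) ↦ Σ_{i=0}^{L−1} W_i c_i is injective) hold. Then every local minimizer (W_L*, W_{L+1}*) of the fixed-feature ResNEst empirical risk R satisfies, for every matrix A ∈ ℝ^{N_o×N_in}, R(W_L*, W_{L+1}*) ≤ (1/N) Σ_{n=1}^N ℓ(A x^n, y^n); that is, the trained ResNEst is at least as good as the best linear predictor of the input. -/

import Mathlib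

/-!
STATEMENT 7 (Corollary 2(a)): Under Assumptions 2, 3 and 4, every local minimizer of
the fixed-feature ResNEst risk `R` is at least as good as the best linear predictor
of the input: R(W_L*, W_{L+1}*) ≤ (1/N) Σ_n ℓ(A x^n, y^n) for every A ∈ ℝ^{N_o×N_in}.
-/

attribute [local instance] Matrix.normedAddCommGroup Matrix.normedSpace

/-!
Write `z n = Q (u n + P (v n))` for the predictions at a local minimizer `(P, Q)` and `D` for the
derivative of the convex risk at `z`. It suffices that `D` vanishes on the predictions `B u + C v`
for all matrices `B` and `C`. Stationarity in `Q` gives `D (B (u + P v)) = 0`, so what remains is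
`D (C v) = 0`.

If `Q` is surjective with right inverse `S`, this is stationarity in `P` along `S * C`. Otherwise,
as `Q` has at least as many columns as rows, some `b ≠ 0` has `Q b = 0`. Adding a small multiple
of a matrix `b cᵀ` to `P` does not change the predictions, so it leads to another local
minimizer. Subtracting the two conditions of stationarity in `Q` gives `D (B b cᵀ v) = 0`, and the
matrices `B b cᵀ` span all matrices `C`.
-/

open Topology Matrix

theorem add_le_of_convexOn_of_hasLineDerivAt {E : Type*} [AddCommGroup E] [Module ℝ E]
    {s : Set E} {f : E → ℝ} {f' : ℝ} {x y : E} (hf : ConvexOn ℝ s f) (hx : x ∈ s) (hy : y ∈ s)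
    (hd : HasLineDerivAt ℝ f f' x (y - x)) : f x + f' ≤ f y := by
  have hline : HasDerivAt (f ∘ AffineMap.lineMap x y) f' (0 : ℝ) := by
    simpa [HasLineDerivAt, Function.comp_def, AffineMap.lineMap_apply, add_comm] using hd
  have hslope := (hf.comp_affineMap (AffineMap.lineMap x y)).le_slope_of_hasDerivAt
    (by simpa using hx) (by simpa using hy) one_pos hline
  simp only [slope_def_field, Function.comp_apply, AffineMap.lineMap_apply_one,
    AffineMap.lineMap_apply_zero, sub_zero, div_one] at hslope
  linarith

theorem eventually_isLocalMin_of_eq {X α : Type*} [TopologicalSpace X] [Preorder α] {f : X → α}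
    {a : X} (h : IsLocalMin f a) : ∀ᶠ b in 𝓝 a, f b = f a → IsLocalMin f b := by
  filter_upwards [eventually_eventually_nhds.2 h] with b hb hba
  simpa only [IsLocalMin, IsMinFilter, hba] using hb

theorem hasLineDerivAt_eq_zero_of_isLocalMin_comp {X G : Type*} [AddCommGroup X] [Module ℝ X]
    [TopologicalSpace X] [ContinuousAdd X] [ContinuousSMul ℝ X] [AddCommGroup G] [Module ℝ G]
    {Φ : G → ℝ} {Φ' : ℝ} {g : X → G} {x d : X} {w : G} (hmin : IsLocalMin (Φ ∘ g) x)
    (hΦ : HasLineDerivAt ℝ Φ Φ' (g x) w) (hg : ∀ t : ℝ, g (x + t • d) = g x + t • w) :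
    Φ' = 0 := by
  have hderiv : HasLineDerivAt ℝ (Φ ∘ g) Φ' x d := by
    simpa only [HasLineDerivAt, Function.comp_apply, hg] using hΦ
  have hcont : ContinuousAt (fun t : ℝ ↦ x + t • d) 0 := by fun_prop
  exact hmin.isExtr.hasLineDerivAt_eq_zero hderiv (by simpa using hcont.tendsto)

theorem mulVec_surjective_or_exists_mulVec_eq_zero {𝕜 m o : Type*} [Field 𝕜] [Fintype m]
    [Fintype o] (h : Fintype.card o ≤ Fintype.card m) (Q : Matrix o m 𝕜) :
    Function.Surjective Q.mulVec ∨ ∃ b ≠ 0, Q *ᵥ b = 0 := by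
  by_cases hinj : Function.Injective Q.mulVecLin
  · have hle := LinearMap.finrank_le_finrank_of_injective hinj
    simp only [Module.finrank_fintype_fun_eq_card] at hle
    exact .inl <| (LinearMap.injective_iff_surjective_of_finrank_eq_finrank
      (by simpa using hle.antisymm h)).1 hinj
  · rw [← LinearMap.ker_eq_bot, ← ne_eq, Submodule.ne_bot_iff] at hinj
    obtain ⟨b, hb, hb0⟩ := hinj
    exact .inr ⟨b, hb0, hb⟩

theorem exists_linearMap_sum_apply_eq {𝕜 ι E : Type*} {V : ι → Type*} [DivisionRing 𝕜]
    [Fintype ι] [AddCommGroup E] [Module 𝕜 E] [∀ i, AddCommGroup (V i)] [∀ i, Module 𝕜 (V i)]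
    (f : ∀ i, V i →ₗ[𝕜] E) (hf : Function.Injective fun c : ∀ i, V i ↦ ∑ i, f i (c i)) (j : ι) :
    ∃ g : E →ₗ[𝕜] V j, ∀ c : ∀ i, V i, g (∑ i, f i (c i)) = c j := by
  let F : (∀ i, V i) →ₗ[𝕜] E := ∑ i, f i ∘ₗ LinearMap.proj i
  have hF (c : ∀ i, V i) : F c = ∑ i, f i (c i) := by simp [F]
  obtain ⟨g, hg⟩ := F.exists_leftInverse_of_injective
    (LinearMap.ker_eq_bot.2 fun c c' h ↦ hf (by simpa only [hF] using h))
  exact ⟨LinearMap.proj j ∘ₗ g, fun c ↦ by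
    rw [← hF]; exact congrFun (LinearMap.congr_fun hg c) j⟩

section EmpiricalRisk

variable {ι F Y : Type*} [Fintype ι]

/-- The empirical risk `(1/N) ∑ₙ ℓ (sₙ, yₙ)` of a loss `ℓ`, as a function of the tuple `s` of all
predictions rather than of the parameters producing them, so that it inherits convexity from `ℓ`.
The samples are indexed by a finite type. -/
noncomputable def empiricalRisk (ℓ : F → Y → ℝ) (y : ι → Y) (s : ι → F) : ℝ :=
  (1 / (Fintype.card ι : ℝ)) * ∑ n, ℓ (s n) (y n)

theorem convexOn_empiricalRisk [AddCommGroup F] [Module ℝ F] {ℓ : F → Y → ℝ} {y : ι → Y}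
    (hℓ : ∀ n, ConvexOn ℝ Set.univ (ℓ · (y n))) : ConvexOn ℝ Set.univ (empiricalRisk ℓ y) := by
  refine ⟨convex_univ, fun s _ s' _ a b ha hb hab ↦ ?_⟩
  have hsum : ∑ n, ℓ ((a • s + b • s') n) (y n) ≤ ∑ n, (a * ℓ (s n) (y n) + b * ℓ (s' n) (y n)) :=
    Finset.sum_le_sum fun n _ ↦ (hℓ n).2 (Set.mem_univ _) (Set.mem_univ _) ha hb hab
  rw [Finset.sum_add_distrib, ← Finset.mul_sum, ← Finset.mul_sum] at hsum
  have hscaled := mul_le_mul_of_nonneg_left hsum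
    (by positivity : 0 ≤ 1 / (Fintype.card ι : ℝ))
  simp only [empiricalRisk, smul_eq_mul]
  linarith

theorem differentiable_empiricalRisk [NormedAddCommGroup F] [NormedSpace ℝ F] {ℓ : F → Y → ℝ}
    {y : ι → Y} (hℓ : ∀ n, Differentiable ℝ (ℓ · (y n))) :
    Differentiable ℝ (empiricalRisk ℓ y) :=
  (Differentiable.fun_sum fun n _ ↦ (hℓ n).comp (differentiable_apply n)).const_mul _

end EmpiricalRisk

section ResNEst

variable {ι k m o : Type*} [Fintype k] [Fintype m]

/-- The predictions `Q (uₙ + P vₙ)` of a ResNEst with fixed features as a function of its trained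
matrices `p = (P, Q)`, which are `(W_L, W_{L+1})` in the paper: `uₙ` is the residual accumulated
by the earlier blocks on sample `n`, and `vₙ` is the feature vector of the last block. -/
def resnestPrediction (u : ι → m → ℝ) (v : ι → k → ℝ) (p : Matrix m k ℝ × Matrix o m ℝ) :
    ι → o → ℝ :=
  fun n ↦ p.2 *ᵥ (u n + p.1 *ᵥ v n)

variable {u : ι → m → ℝ} {v : ι → k → ℝ} {p : Matrix m k ℝ × Matrix o m ℝ}

theorem resnestPrediction_add_smul_left (C : Matrix m k ℝ) (t : ℝ) :
    resnestPrediction u v (p + t • (C, 0)) =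
      resnestPrediction u v p + t • fun n ↦ (p.2 * C) *ᵥ v n := by
  funext n
  simp [resnestPrediction, add_mulVec, smul_mulVec, mulVec_add, mulVec_smul, add_assoc]

theorem resnestPrediction_add_smul_right (B : Matrix o m ℝ) (t : ℝ) :
    resnestPrediction u v (p + t • (0, B)) =
      resnestPrediction u v p + t • resnestPrediction u v (p.1, B) := by
  funext n
  simp [resnestPrediction, add_mulVec, smul_mulVec]

variable {Φ : (ι → o → ℝ) → ℝ} {D : (ι → o → ℝ) →ₗ[ℝ] ℝ}

theorem stationary_left_of_isLocalMin (hp : IsLocalMin (Φ ∘ resnestPrediction u v) p)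
    (hΦ : ∀ w, HasLineDerivAt ℝ Φ (D w) (resnestPrediction u v p) w) (C : Matrix m k ℝ) :
    D (fun n ↦ (p.2 * C) *ᵥ v n) = 0 :=
  hasLineDerivAt_eq_zero_of_isLocalMin_comp hp (hΦ _) (resnestPrediction_add_smul_left C)

theorem stationary_right_of_isLocalMin (hp : IsLocalMin (Φ ∘ resnestPrediction u v) p)
    (hΦ : ∀ w, HasLineDerivAt ℝ Φ (D w) (resnestPrediction u v p) w) (B : Matrix o m ℝ) :
    D (resnestPrediction u v (p.1, B)) = 0 :=
  hasLineDerivAt_eq_zero_of_isLocalMin_comp hp (hΦ _) (resnestPrediction_add_smul_right B)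

theorem stationary_mul_of_isLocalMin_of_mul_eq_zero
    (hp : IsLocalMin (Φ ∘ resnestPrediction u v) p)
    (hΦ : ∀ w, HasLineDerivAt ℝ Φ (D w) (resnestPrediction u v p) w) {C : Matrix m k ℝ}
    (hC : p.2 * C = 0) (B : Matrix o m ℝ) : D (fun n ↦ (B * C) *ᵥ v n) = 0 := by
  have hsame (t : ℝ) : resnestPrediction u v (p + t • (C, 0)) = resnestPrediction u v p := by
    rw [resnestPrediction_add_smul_left, hC]
    funext n
    simp
  have hcont : ContinuousAt (fun t : ℝ ↦ p + t • ((C, 0) : Matrix m k ℝ × Matrix o m ℝ)) 0 := by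
    fun_prop
  have hlocal : ∀ᶠ t : ℝ in 𝓝[≠] 0, IsLocalMin (Φ ∘ resnestPrediction u v) (p + t • (C, 0)) := by
    refine nhdsWithin_le_nhds ?_
    filter_upwards [hcont.eventually (by simpa using eventually_isLocalMin_of_eq hp)] with t ht
    exact ht (congrArg Φ (hsame t))
  obtain ⟨t, ht, ht0 : t ≠ 0⟩ := (hlocal.and self_mem_nhdsWithin).exists
  have hmoved : D (resnestPrediction u v ((p.1, B) + t • (C, 0))) = 0 := by
    simpa using stationary_right_of_isLocalMin ht (by rwa [hsame]) B
  rw [resnestPrediction_add_smul_left, map_add, stationary_right_of_isLocalMin hp hΦ, zero_add,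
    map_smul] at hmoved
  exact (smul_eq_zero.1 hmoved).resolve_left ht0

theorem stationary_features_of_isLocalMin [Fintype o] (hmo : Fintype.card o ≤ Fintype.card m)
    (hp : IsLocalMin (Φ ∘ resnestPrediction u v) p)
    (hΦ : ∀ w, HasLineDerivAt ℝ Φ (D w) (resnestPrediction u v p) w) (C : Matrix o k ℝ) :
    D (fun n ↦ C *ᵥ v n) = 0 := by
  classical
  obtain hsurj | ⟨b, hb0, hb⟩ := mulVec_surjective_or_exists_mulVec_eq_zero hmo p.2
  · obtain ⟨S, hS⟩ := mulVec_surjective_iff_exists_right_inverse.1 hsurj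
    simpa [← Matrix.mul_assoc, hS] using stationary_left_of_isLocalMin hp hΦ (S * C)
  · obtain ⟨j, hj : b j ≠ 0⟩ := Function.ne_iff.1 hb0
    induction C using Matrix.induction_on' with
    | h_zero => simpa [Pi.zero_def] using D.map_zero
    | h_add C C' hC hC' =>
      simp only [add_mulVec]
      exact (D.map_add _ _).trans (by rw [hC, hC', add_zero])
    | h_std_basis i l r =>
      have hfactor : single i l r = single i j (r / b j) * vecMulVec b (Pi.single l 1) := by
        rw [mul_vecMulVec, single_mulVec, div_mul_cancel₀ r hj]
        ext i' l'
        simp only [single_apply, vecMulVec_apply, Function.update_apply, Pi.single_apply,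
          Pi.zero_apply]
        grind
      have hker : p.2 * vecMulVec b (Pi.single l 1) = 0 := by
        rw [mul_vecMulVec, hb, zero_vecMulVec]
      rw [hfactor]
      exact stationary_mul_of_isLocalMin_of_mul_eq_zero hp hΦ hker _

theorem resnest_local_min_beats_linear_predictor_general [Fintype o]
    (hmo : Fintype.card o ≤ Fintype.card m) (hconv : ConvexOn ℝ Set.univ Φ)
    (hΦ : ∀ w, HasLineDerivAt ℝ Φ (D w) (resnestPrediction u v p) w)
    (hp : IsLocalMin (Φ ∘ resnestPrediction u v) p) (B : Matrix o m ℝ) (C : Matrix o k ℝ) :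
    Φ (resnestPrediction u v p) ≤ Φ (fun n ↦ B *ᵥ u n + C *ᵥ v n) := by
  have hlinear : D (fun n ↦ B *ᵥ u n + C *ᵥ v n) = 0 := by
    have hsplit : (fun n ↦ B *ᵥ u n + C *ᵥ v n) =
        resnestPrediction u v (p.1, B) + fun n ↦ (C - B * p.1) *ᵥ v n := by
      funext n
      simp [resnestPrediction, mulVec_add, sub_mulVec]
    rw [hsplit, map_add, stationary_right_of_isLocalMin hp hΦ,
      stationary_features_of_isLocalMin hmo hp hΦ, add_zero]
  have hself : D (resnestPrediction u v p) = 0 := stationary_right_of_isLocalMin hp hΦ p.2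
  have htangent := add_le_of_convexOn_of_hasLineDerivAt hconv (Set.mem_univ _)
    (Set.mem_univ (fun n ↦ B *ᵥ u n + C *ᵥ v n)) (hΦ _)
  simpa [hlinear, hself] using htangent

end ResNEst

theorem resnest_local_min_beats_linear_predictor
    (N L M No : ℕ) (hN : 0 < N) (hL : 1 ≤ L) (hM : 0 < M) (hNo : 0 < No)
    -- feature dimensions, K_0 = N_in is the input dimension
    (K : ℕ → ℕ)
    -- inputs x^n ∈ ℝ^{N_in} and targets y^n ∈ ℝ^{N_o}
    (x : Fin N → Fin (K 0) → ℝ)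
    (y : Fin N → Fin No → ℝ)
    -- fixed matrices W_i ∈ ℝ^{M×K_i}, i = 0, …, L−1
    (W : (i : ℕ) → Matrix (Fin M) (Fin (K i)) ℝ)
    -- feature vectors v_i^n ∈ ℝ^{K_i}, with v_0^n = x^n
    (v : (i : ℕ) → Fin N → Fin (K i) → ℝ)
    (hv0 : ∀ n, v 0 n = x n)
    -- u^n = Σ_{i=0}^{L−1} W_i v_i^n
    (u : Fin N → Fin M → ℝ)
    (hu : ∀ n, u n = ∑ i ∈ Finset.range L, (W i).mulVec (v i n))
    -- the loss function
    (ℓ : (Fin No → ℝ) → (Fin No → ℝ) → ℝ)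
    -- Assumption 2: ℓ(yhat, y) is differentiable and convex in yhat for every y
    (hdiff : ∀ yy, Differentiable ℝ (fun yhat => ℓ yhat yy))
    (hconv : ∀ yy, ConvexOn ℝ Set.univ (fun yhat => ℓ yhat yy))
    -- Assumption 3: M ≥ N_o
    (hMNo : M ≥ No)
    -- Assumption 4: (c_0, …, c_{L−1}) ↦ Σ_{i=0}^{L−1} W_i c_i is injective
    (hinj : Function.Injective
      (fun c : (i : Fin L) → Fin (K i.val) → ℝ => ∑ i : Fin L, (W i.val).mulVec (c i)))
    -- fixed-feature ResNEst empirical risk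
    (R : Matrix (Fin M) (Fin (K L)) ℝ × Matrix (Fin No) (Fin M) ℝ → ℝ)
    (hR : ∀ p, R p =
      (1 / (N : ℝ)) * ∑ n, ℓ (p.2.mulVec (u n + p.1.mulVec (v L n))) (y n))
    -- a local minimizer of R
    (p : Matrix (Fin M) (Fin (K L)) ℝ × Matrix (Fin No) (Fin M) ℝ)
    (hp : IsLocalMin R p) :
    ∀ A : Matrix (Fin No) (Fin (K 0)) ℝ,
      R p ≤ (1 / (N : ℝ)) * ∑ n, ℓ (A.mulVec (x n)) (y n) := by
  intro A
  obtain ⟨g, hg⟩ := exists_linearMap_sum_apply_eq (fun i : Fin L ↦ (W i).mulVecLin) hinj ⟨0, hL⟩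
  have hA (n : Fin N) : LinearMap.toMatrix' (A.mulVecLin ∘ₗ g) *ᵥ u n = A *ᵥ x n := by
    simpa [hu, hv0, Finset.sum_range] using congrArg A.mulVecLin (hg fun i ↦ v i n)
  obtain rfl : R = empiricalRisk ℓ y ∘ resnestPrediction u (v L) :=
    funext fun q ↦ by simp [hR, empiricalRisk, resnestPrediction]
  simpa [hA, empiricalRisk] using resnest_local_min_beats_linear_predictor_general (by simpa)
    (convexOn_empiricalRisk fun n ↦ hconv (y n))
    (fun w ↦ (differentiable_empiricalRisk (fun n ↦ hdiff (y n)) _).hasFDerivAt.hasLineDerivAt w) hp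
    (LinearMap.toMatrix' (A.mulVecLin ∘ₗ g)) 0
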